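/- Let σ > 0. The α-quenching map Φ_σ is Lipschitz with constant 2: for all b₁, b₂ ∈ ℝ³, ‖Φ_σ(b₁) − Φ_σ(b₂)‖ ≤ 2‖b₁ − b₂‖. (This is the pointwise estimate underlying Lemma 3.4 of the paper, obtained from the identity Φ_σ(b₁) − Φ_σ(b₂) = [(1+σ‖b₂‖²)(b₁−b₂) + σ(‖b₂‖² − ‖b₁‖²)b₂] / ((1+σ‖b₁‖²)(1+σ‖b₂‖²)).) -/

import Mathlib

/-- The α-quenching map `Φ_σ : ℝ³ → ℝ³`, `Φ_σ(b) = (1 + σ‖b‖²)⁻¹ b`. -/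
noncomputable def alphaQuench (σ : ℝ) (b : EuclideanSpace ℝ (Fin 3)) :
    EuclideanSpace ℝ (Fin 3) :=
  (1 + σ * ‖b‖ ^ 2)⁻¹ • b

/-!
The inner product structure improves the constant to `1`. Polarization gives
`‖s • x - t • y‖² = s t ‖x - y‖² + (s - t) (s ‖x‖² - t ‖y‖²)`. For `s = (1 + σ‖x‖²)⁻¹` and
`t = (1 + σ‖y‖²)⁻¹` the last term equals `-σ (s t (‖x‖² - ‖y‖²))²`, so it can be dropped, and
`s t ≤ 1`.
-/

section InnerProductSpace

variable {E : Type*} [SeminormedAddCommGroup E] [InnerProductSpace ℝ E]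

theorem norm_smul_sub_smul_sq_real (s t : ℝ) (x y : E) :
    ‖s • x - t • y‖ ^ 2 = s * t * ‖x - y‖ ^ 2 + (s - t) * (s * ‖x‖ ^ 2 - t * ‖y‖ ^ 2) := by
  rw [norm_sub_sq_real, norm_sub_sq_real, real_inner_smul_left, real_inner_smul_right,
    norm_smul, norm_smul, mul_pow, mul_pow, Real.norm_eq_abs, Real.norm_eq_abs, sq_abs, sq_abs]
  ring

theorem norm_smul_sub_smul_le_norm_sub {s t : ℝ} {x y : E} (hst : s * t ≤ 1)
    (h : (s - t) * (s * ‖x‖ ^ 2 - t * ‖y‖ ^ 2) ≤ 0) :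
    ‖s • x - t • y‖ ≤ ‖x - y‖ := by
  refine le_of_sq_le_sq ?_ (norm_nonneg _)
  calc ‖s • x - t • y‖ ^ 2
      = s * t * ‖x - y‖ ^ 2 + (s - t) * (s * ‖x‖ ^ 2 - t * ‖y‖ ^ 2) :=
        norm_smul_sub_smul_sq_real s t x y
    _ ≤ s * t * ‖x - y‖ ^ 2 := add_le_of_nonpos_right h
    _ ≤ ‖x - y‖ ^ 2 := mul_le_of_le_one_left (sq_nonneg _) hst

end InnerProductSpace

theorem inv_one_add_mul_sub_mul_sub {K : Type*} [Field K] {σ u v : K}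
    (hu : 1 + σ * u ≠ 0) (hv : 1 + σ * v ≠ 0) :
    ((1 + σ * u)⁻¹ - (1 + σ * v)⁻¹) * ((1 + σ * u)⁻¹ * u - (1 + σ * v)⁻¹ * v) =
      -(σ * ((1 + σ * u)⁻¹ * (1 + σ * v)⁻¹ * (u - v)) ^ 2) := by
  field_simp
  ring

theorem alphaQuench_lipschitz_general {E : Type*} [SeminormedAddCommGroup E]
    [InnerProductSpace ℝ E] {σ : ℝ} (hσ : 0 ≤ σ) (x y : E) :
    ‖(1 + σ * ‖x‖ ^ 2)⁻¹ • x - (1 + σ * ‖y‖ ^ 2)⁻¹ • y‖ ≤ ‖x - y‖ := by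
  have one_le (z : E) : 1 ≤ 1 + σ * ‖z‖ ^ 2 := le_add_of_nonneg_right (by positivity)
  have ne_zero (z : E) : 1 + σ * ‖z‖ ^ 2 ≠ 0 := (zero_lt_one.trans_le (one_le z)).ne'
  apply norm_smul_sub_smul_le_norm_sub
  · rw [← mul_inv]
    exact inv_le_one_of_one_le₀ (one_le_mul_of_one_le_of_one_le (one_le x) (one_le y))
  · rw [inv_one_add_mul_sub_mul_sub (ne_zero x) (ne_zero y)]
    exact neg_nonpos.2 (by positivity)

theorem alphaQuench_lipschitz (σ : ℝ) (hσ : 0 < σ)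
    (b₁ b₂ : EuclideanSpace ℝ (Fin 3)) :
    ‖alphaQuench σ b₁ - alphaQuench σ b₂‖ ≤ 2 * ‖b₁ - b₂‖ :=
  (alphaQuench_lipschitz_general hσ.le b₁ b₂).trans
    (le_mul_of_one_le_left (norm_nonneg _) one_le_two)
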